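/- For any nonzero [αβ⁻¹] ∈ Q_Γ with αβ⁻¹ in right normal form, [αβ⁻¹] is L*-related to the idempotent [ββ⁻¹]. -/

import Mathlib

/-!
Write `B` for `r(α) = r(β)`. Since `β` is linear, `β⁻¹β = B`, and `Bβ⁻¹ = β⁻¹`; hence `ββ⁻¹` is
idempotent and `αβ⁻¹ · ββ⁻¹ = αβ⁻¹`, which gives one implication of `L*`. The other one says that
`α` is left cancellable on elements `z` with `Bz = z`. Stripping the symbols of `α` from the left,
with `t⁻¹t = r(t)` for a symbol `t ∈ T`, this reduces to the cancellation law

  `A C w = A C w' → C w = C w'` for `A, C ∈ T⁰` with `A ∩ C ≠ ∅` (`vertex_cancel`).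

For `A = C` it is trivial. For `A ≠ C` it is proved by constructing a right act `M` of `Q_Γ`
with a point `m` such that `m · A = m` and `m · C = [C]`, where `Q_Γ` is embedded in `M` as a subact.
The act is `M = List T ⊔ Q_Γ`. A list `[t₁, …, tₖ]` is a stack standing for the element
`A tₖ⁻¹ ⋯ t₁⁻¹`, with `m` the empty stack; as soon as `m` meets a generator of source `C`, the
computation moves to `Q_Γ`. The inverses have to be remembered because of `t⁻¹t = r(t)`, which can
lead back to `m` when `r(t) = A`. An element of `T⁰` fixes the stacks that end at it, apart from
`C` acting on `m`, and all remaining products of stacks by generators are `0`.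
-/

namespace NetworkSemigroup

/-- A network: vertices `V`, relations `T`, with source and range maps assigning to each
relation disjoint nonempty subsets of `V`. -/
structure Network (V T : Type) where
  s : T → Set V
  r : T → Set V
  s_nonempty : ∀ t, (s t).Nonempty
  r_nonempty : ∀ t, (r t).Nonempty
  disj : ∀ t, s t ∩ r t = ∅

variable {V T : Type}

/-- Membership in `T⁰`: sources and ranges of relations, together with singletons of vertices. -/
def Network.InT0 (N : Network V T) (A : Set V) : Prop :=
  (∃ t, A = N.s t) ∨ (∃ t, A = N.r t) ∨ (∃ v : V, A = {v})

/-- The set `T⁰` as a type. -/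
def Network.T0 (N : Network V T) : Type := { A : Set V // N.InT0 A }

/-- The generating set `X = T ∪ T⁰ ∪ T⁻¹ ∪ {0}` of the presentation of `Q_Γ`. -/
inductive Gen (N : Network V T) : Type
  | pos : T → Gen N
  | neg : T → Gen N
  | ver : N.T0 → Gen N
  | zero : Gen N

namespace Gen

variable {N : Network V T}

/-- The source (as a set of vertices) of a generator. -/
def srcSet : Gen N → Set V
  | .pos t => N.s t
  | .neg t => N.r t
  | .ver A => A.1
  | .zero => ∅

/-- The range (as a set of vertices) of a generator. -/
def rngSet : Gen N → Set V
  | .pos t => N.r t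
  | .neg t => N.s t
  | .ver A => A.1
  | .zero => ∅

/-- The source of a generator, as the corresponding element of `T⁰`. -/
def srcGen : Gen N → Gen N
  | .pos t => .ver ⟨N.s t, Or.inl ⟨t, rfl⟩⟩
  | .neg t => .ver ⟨N.r t, Or.inr (Or.inl ⟨t, rfl⟩)⟩
  | .ver A => .ver A
  | .zero => .zero

/-- The range of a generator, as the corresponding element of `T⁰`. -/
def rngGen : Gen N → Gen N
  | .pos t => .ver ⟨N.r t, Or.inr (Or.inl ⟨t, rfl⟩)⟩
  | .neg t => .ver ⟨N.s t, Or.inl ⟨t, rfl⟩⟩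
  | .ver A => .ver A
  | .zero => .zero

end Gen

open FreeSemigroup

/-- The defining relations (NR1)–(NR6) of the presentation of `Q_Γ`, as a binary relation on
the free semigroup over the generators. -/
inductive NRel (N : Network V T) : FreeSemigroup (Gen N) → FreeSemigroup (Gen N) → Prop
  | nr1l (g : Gen N) (hg : g ≠ .zero) : NRel N (of g.srcGen * of g) (of g)
  | nr1r (g : Gen N) (hg : g ≠ .zero) : NRel N (of g * of g.rngGen) (of g)
  | nr2 (g₁ g₂ : Gen N) (h₁ : g₁ ≠ .zero) (h₂ : g₂ ≠ .zero)
      (h : g₁.rngSet ∩ g₂.srcSet = ∅) : NRel N (of g₁ * of g₂) (of .zero)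
  | nr3 (t₁ t₂ : T) (h : t₁ ≠ t₂) :
      NRel N (of (.neg t₁) * of (.pos t₂)) (of .zero)
  | nr4 (t : T) :
      NRel N (of (.neg t) * of (.pos t)) (of (.ver ⟨N.r t, Or.inr (Or.inl ⟨t, rfl⟩)⟩))
  | nr5 (t : T) (A : N.T0) (h : A.1 ≠ N.s t) :
      NRel N (of (.neg t) * of (.ver A)) (of .zero)
  | nr6l (x : Gen N) : NRel N (of .zero * of x) (of .zero)
  | nr6r (x : Gen N) : NRel N (of x * of .zero) (of .zero)

/-- The congruence on the free semigroup generated by the defining relations. -/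
def QCon (N : Network V T) : Con (FreeSemigroup (Gen N)) := conGen (NRel N)

/-- The semigroup `Q_Γ` given by the presentation `⟨X : R⟩`. -/
abbrev QGamma (N : Network V T) : Type := (QCon N).Quotient

/-- The congruence class of a word. -/
def Qofw {N : Network V T} (w : FreeSemigroup (Gen N)) : QGamma N := (w : (QCon N).Quotient)

/-- The zero element `[0]` of `Q_Γ`. -/
def Qzero (N : Network V T) : QGamma N := Qofw (of .zero)

/-- Path symbols: elements of `T ∪ T⁰`. -/
def PSym (N : Network V T) : Type := T ⊕ N.T0

namespace PSym

variable {N : Network V T}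

/-- The source of a path symbol. -/
def src : PSym N → Set V
  | Sum.inl t => N.s t
  | Sum.inr A => A.1

/-- The range of a path symbol. -/
def rng : PSym N → Set V
  | Sum.inl t => N.r t
  | Sum.inr A => A.1

/-- The generator corresponding to a path symbol. -/
def toGen : PSym N → Gen N
  | Sum.inl t => Gen.pos t
  | Sum.inr A => Gen.ver A

/-- The generator corresponding to the inverse of a path symbol (`t ↦ t⁻¹`, `A ↦ A`). -/
def toInvGen : PSym N → Gen N
  | Sum.inl t => Gen.neg t
  | Sum.inr A => Gen.ver A

/-- The path symbol is the element of `T⁰` given by the set `B`. -/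
def IsVerOf : PSym N → Set V → Prop
  | Sum.inl _, _ => False
  | Sum.inr A, B => A.1 = B

end PSym

/-- `L` is a path: a nonempty sequence of elements of `T ∪ T⁰` in which the range of each
symbol meets the source of the next one. -/
def IsPath (N : Network V T) (L : List (PSym N)) : Prop :=
  L ≠ [] ∧ ∀ (i : ℕ) (a b : PSym N), L[i]? = some a → L[i + 1]? = some b →
    (a.rng ∩ b.src).Nonempty

/-- `L` is linear: the range of each symbol equals the source of the next one. -/
def IsLinear (N : Network V T) (L : List (PSym N)) : Prop :=
  ∀ (i : ℕ) (a b : PSym N), L[i]? = some a → L[i + 1]? = some b → a.rng = b.src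

/-- `L = t₁⋯tₙ` is reduced: `t_{n-1} ≠ s(tₙ)` and, for `1 < i < n`,
`t_{i-1} ≠ s(tᵢ)` and `t_{i+1} ≠ r(tᵢ)`. -/
def IsReducedPath (N : Network V T) (L : List (PSym N)) : Prop :=
  (∀ (i : ℕ) (a b : PSym N), L[i]? = some a → L[i + 1]? = some b →
      i + 2 = L.length → ¬ a.IsVerOf b.src) ∧
  (∀ (i : ℕ) (a b c : PSym N), L[i]? = some a → L[i + 1]? = some b → L[i + 2]? = some c →
      ¬ a.IsVerOf b.src ∧ ¬ c.IsVerOf b.rng)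

/-- `RP(Γ)`: reduced paths. -/
def RP (N : Network V T) : Set (List (PSym N)) :=
  { L | IsPath N L ∧ IsReducedPath N L }

/-- `RLP(Γ)`: reduced linear paths. -/
def RLP (N : Network V T) : Set (List (PSym N)) :=
  { L | IsPath N L ∧ IsLinear N L ∧ IsReducedPath N L }

/-- The source `s(α)` of a path. -/
def pathSrc (N : Network V T) (L : List (PSym N)) : Set V :=
  match L.head? with
  | some a => a.src
  | none => ∅

/-- The range `r(α)` of a path. -/
def pathRng (N : Network V T) (L : List (PSym N)) : Set V :=
  match L.getLast? with
  | some a => a.rng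
  | none => ∅

/-- The path is a single symbol from `T⁰` (an "empty path"). -/
def InT0Path (N : Network V T) (L : List (PSym N)) : Prop :=
  ∃ A : N.T0, L = [Sum.inr A]

/-- The word of the free semigroup determined by a nonempty list of generators
(by convention the empty list is sent to the word `0`). -/
def genWord {N : Network V T} : List (Gen N) → FreeSemigroup (Gen N)
  | [] => of .zero
  | a :: M => ⟨a, M⟩

/-- The word `α` of a path `α`. -/
def word {N : Network V T} (L : List (PSym N)) : FreeSemigroup (Gen N) :=
  genWord (L.map PSym.toGen)

/-- The word `α⁻¹ = tₙ⁻¹⋯t₁⁻¹` of a path `α = t₁⋯tₙ`. -/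
def invWord {N : Network V T} (L : List (PSym N)) : FreeSemigroup (Gen N) :=
  genWord (L.reverse.map PSym.toInvGen)

/-- `αβ⁻¹` is in right normal form: `α ∈ RP(Γ)`, `β ∈ RLP(Γ)` and `r(α) = r(β)`. -/
def IsRNF (N : Network V T) (α β : List (PSym N)) : Prop :=
  α ∈ RP N ∧ β ∈ RLP N ∧ pathRng N α = pathRng N β

/-- The element `[αβ⁻¹]` of `Q_Γ`. -/
def Qrnf (N : Network V T) (α β : List (PSym N)) : QGamma N :=
  Qofw (word α * invWord β)

/-- The relation `L*`: `a L* b` iff for all `x, y ∈ S¹`, `ax = ay ⇔ bx = by`. -/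
def LStar {S : Type*} [Semigroup S] (a b : S) : Prop :=
  ∀ x y : WithOne S,
    (a : WithOne S) * x = (a : WithOne S) * y ↔ (b : WithOne S) * x = (b : WithOne S) * y

/-- The relation `R*`: `a R* b` iff for all `x, y ∈ S¹`, `xa = ya ⇔ xb = yb`. -/
def RStar {S : Type*} [Semigroup S] (a b : S) : Prop :=
  ∀ x y : WithOne S,
    x * (a : WithOne S) = y * (a : WithOne S) ↔ x * (b : WithOne S) = y * (b : WithOne S)

/-- Green's relation `R`: `a R b` iff `aS¹ = bS¹`. -/
def GreenR {S : Type*} [Semigroup S] (a b : S) : Prop :=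
  (∃ x : WithOne S, (a : WithOne S) * x = b) ∧ ∃ y : WithOne S, (b : WithOne S) * y = a

/-- Green's relation `L`: `a L b` iff `S¹a = S¹b`. -/
def GreenL {S : Type*} [Semigroup S] (a b : S) : Prop :=
  (∃ x : WithOne S, x * (a : WithOne S) = b) ∧ ∃ y : WithOne S, y * (b : WithOne S) = a

/-- Green's relation `H = L ∩ R`. -/
def GreenH {S : Type*} [Semigroup S] (a b : S) : Prop :=
  GreenL a b ∧ GreenR a b

section Aux

variable {N : Network V T}

/-! ### Elementary relations in `Q_Γ` -/

/-- The class in `Q_Γ` of a generator. -/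
def Qgen (g : Gen N) : QGamma N := Qofw (FreeSemigroup.of g)

theorem Qofw_mul (u v : FreeSemigroup (Gen N)) : Qofw (u * v) = Qofw u * Qofw v := rfl

theorem Qofw_eq_of_rel {u v : FreeSemigroup (Gen N)} (h : NRel N u v) : Qofw u = Qofw v :=
  (Con.eq (QCon N)).2 (ConGen.Rel.of _ _ h)

theorem Qzero_mul (q : QGamma N) : Qzero N * q = Qzero N := by
  induction q using Con.induction_on with
  | H w =>
    change Qofw (FreeSemigroup.of Gen.zero) * Qofw w = Qofw (FreeSemigroup.of Gen.zero)
    induction w using FreeSemigroup.recOnMul with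
    | ih1 x => exact Qofw_eq_of_rel (NRel.nr6l x)
    | ih2 x y hx hy => rw [Qofw_mul, ← mul_assoc, hx, hy]

/-! ### The act separating `C Q_Γ` after left multiplication by `A` -/

/-- The set of vertices at which a stack ends: `A` for the empty stack, and `s(t)` for a stack
with top `t`. -/
def stackTop (A : Set V) : List T → Set V
  | [] => A
  | t :: _ => N.s t

open Classical in
/-- The action of a generator on `List T ⊕ Q_Γ`. Inverses are pushed on the stack, and a symbol
`t ∈ T` pops a matching `t⁻¹`; generators with source `C` lead from the empty stack to `Q_Γ`. On
`Q_Γ` the action is right multiplication. -/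
noncomputable def step (A C : Set V) (g : Gen N) : List T ⊕ QGamma N → List T ⊕ QGamma N
  | .inr q => .inr (q * Qgen g)
  | .inl l =>
    if l = [] ∧ g.srcSet = C then .inr (Qgen g) else
    match g, l with
    | .ver D, l => if D.1 = stackTop (N := N) A l then .inl l else .inr (Qzero N)
    | .neg u, l => if N.r u = stackTop (N := N) A l then .inl (u :: l) else .inr (Qzero N)
    | .pos u, k :: l =>
      -- Testing `r(u)` against the rest of the stack spares carrying an invariant saying that
      -- stacks are linear.
      if u = k ∧ N.r u = stackTop (N := N) A l then .inl l else .inr (Qzero N)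
    | .pos _, [] => .inr (Qzero N)
    | .zero, _ => .inr (Qzero N)

/-- The action of words on `List T ⊕ Q_Γ`; the opposite monoid turns it into a right action. -/
noncomputable def run (A C : Set V) :
    FreeSemigroup (Gen N) →ₙ* (Function.End (List T ⊕ QGamma N))ᵐᵒᵖ :=
  FreeSemigroup.lift fun g => MulOpposite.op (step A C g)

/-- The action of a word on a point. -/
noncomputable def act (A C : Set V) (w : FreeSemigroup (Gen N)) (m : List T ⊕ QGamma N) :
    List T ⊕ QGamma N :=
  (run A C w).unop m

theorem act_of (A C : Set V) (g : Gen N) (m : List T ⊕ QGamma N) :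
    act A C (FreeSemigroup.of g) m = step A C g m := rfl

theorem act_mul (A C : Set V) (u v : FreeSemigroup (Gen N)) (m : List T ⊕ QGamma N) :
    act A C (u * v) m = act A C v (act A C u m) := by
  unfold act
  rw [map_mul]; rfl

theorem act_inr (A C : Set V) (w : FreeSemigroup (Gen N)) (q : QGamma N) :
    act A C w (.inr q) = .inr (q * Qofw w) := by
  induction w using FreeSemigroup.recOnMul generalizing q with
  | ih1 x => rfl
  | ih2 x y hx hy => rw [act_mul, hx, hy, Qofw_mul, mul_assoc]

theorem step_inr (A C : Set V) (g : Gen N) (q : QGamma N) :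
    step A C g (.inr q) = .inr (q * Qgen g) := rfl

/-- A generator that does not lead to `Q_Γ` sends a stack to `0` unless its source is exactly the
end of the stack. -/
theorem step_eq_zero_of_ne {A C : Set V} (g : Gen N) (l : List T)
    (hC : ¬ (l = [] ∧ g.srcSet = C)) (h : g.srcSet ≠ stackTop (N := N) A l) :
    step A C g (.inl l) = .inr (Qzero N) := by
  rcases g with u | u | D | _
  · rcases l with _ | ⟨k, l⟩
    · exact if_neg hC
    · have h1 : ¬ (u = k ∧ N.r u = stackTop (N := N) A l) := by
        rintro ⟨rfl, -⟩
        exact h rfl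
      simp only [step, if_neg hC, if_neg h1]
  · have h1 : ¬ N.r u = stackTop (N := N) A l := h
    simp only [step, if_neg hC, if_neg h1]
  · have h1 : ¬ D.1 = stackTop (N := N) A l := h
    simp only [step, if_neg hC, if_neg h1]
  · simp only [step, if_neg hC]

/-- A generator sends a stack to `0` unless its source meets the end of the stack. -/
theorem step_eq_zero {A C : Set V} (hAC : (A ∩ C).Nonempty) (g : Gen N) (l : List T)
    (h : stackTop (N := N) A l ∩ g.srcSet = ∅) : step A C g (.inl l) = .inr (Qzero N) := by
  apply step_eq_zero_of_ne
  · rintro ⟨rfl, hg⟩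
    rw [hg] at h
    exact hAC.ne_empty h
  · intro e
    rw [e, Set.inter_self] at h
    cases l with
    | nil => exact (hAC.mono Set.inter_subset_left).ne_empty h
    | cons k l => exact (N.s_nonempty k).ne_empty h

/-- The end of a stack acts trivially on the stack; on the empty stack this needs `A ≠ C`. -/
theorem step_stackTop {A C : Set V} (hne : A ≠ C) (D : N.T0) (l : List T)
    (h : D.1 = stackTop (N := N) A l) : step A C (.ver D) (.inl l) = .inl l := by
  have hC : ¬ (l = [] ∧ (Gen.ver D).srcSet = C) := by
    rintro ⟨rfl, hg⟩
    exact hne (h.symm.trans hg)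
  simp [step, hC, h]

/-- The three possible outcomes of applying a generator to a stack: passage to `Q_Γ`,
the zero of `Q_Γ`, or a stack ending in the range of the generator. -/
theorem step_cases (A C : Set V) (g : Gen N) (l : List T) :
    (l = [] ∧ g.srcSet = C ∧ step A C g (.inl l) = .inr (Qgen g)) ∨
    step A C g (.inl l) = .inr (Qzero N) ∨
    ∃ l', step A C g (.inl l) = .inl l' ∧ stackTop (N := N) A l' = g.rngSet := by
  by_cases hC : l = [] ∧ g.srcSet = C
  · left
    exact ⟨hC.1, hC.2, by simp [step, hC]⟩
  right
  rcases g with u | u | D | _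
  · rcases l with _ | ⟨k, l⟩
    · left
      exact if_neg hC
    · by_cases h : u = k ∧ N.r u = stackTop (N := N) A l
      · right
        exact ⟨l, by simp only [step, if_neg hC, if_pos h], h.2.symm⟩
      · left
        simp only [step, if_neg hC, if_neg h]
  · by_cases h : N.r u = stackTop (N := N) A l
    · right
      exact ⟨u :: l, by simp only [step, if_neg hC, if_pos h], rfl⟩
    · left
      simp only [step, if_neg hC, if_neg h]
  · by_cases h : D.1 = stackTop (N := N) A l
    · right
      exact ⟨l, by simp only [step, if_neg hC, if_pos h], h.symm⟩
    · left
      simp only [step, if_neg hC, if_neg h]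
  · left
    simp only [step, if_neg hC]

theorem Qgen_mul_eq {g₁ g₂ g : Gen N}
    (h : NRel N (FreeSemigroup.of g₁ * FreeSemigroup.of g₂) (FreeSemigroup.of g)) :
    Qgen g₁ * Qgen g₂ = Qgen g := Qofw_eq_of_rel h

/-- The defining relations of `Q_Γ` hold in the act. -/
theorem act_rel {A C : Set V} (hne : A ≠ C) (hAC : (A ∩ C).Nonempty)
    {u v : FreeSemigroup (Gen N)} (h : NRel N u v) (m : List T ⊕ QGamma N) :
    act A C u m = act A C v m := by
  rcases m with l | q
  swap
  · rw [act_inr, act_inr, Qofw_eq_of_rel h]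
  have step_zero : ∀ l : List T, step A C (Gen.zero : Gen N) (.inl l) = .inr (Qzero N) := by
    intro l
    exact step_eq_zero hAC _ _ (by simp [Gen.srcSet])
  cases h with
  | nr1l g hg =>
    rw [act_mul, act_of, act_of, act_of]
    by_cases hC : l = [] ∧ g.srcSet = C
    · obtain ⟨rfl, hC⟩ := hC
      have e1 : step A C g (.inl []) = .inr (Qgen g) := by simp [step, hC]
      have hs : g.srcGen.srcSet = C := by
        rw [← hC]; cases g <;> rfl
      have e2 : step A C g.srcGen (.inl []) = .inr (Qgen g.srcGen) := by simp [step, hs]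
      rw [e1, e2, step_inr, Qgen_mul_eq (NRel.nr1l g hg)]
    · by_cases ht : g.srcSet = stackTop (N := N) A l
      · have : step A C g.srcGen (.inl l) = .inl l := by
          rcases g with u | u | D | _
          · exact step_stackTop hne _ _ ht
          · exact step_stackTop hne _ _ ht
          · exact step_stackTop hne _ _ ht
          · exact absurd rfl hg
        rw [this]
      · have hsrc : g.srcGen.srcSet = g.srcSet := by cases g <;> rfl
        rw [step_eq_zero_of_ne g l hC ht, step_eq_zero_of_ne g.srcGen l (hsrc ▸ hC) (hsrc ▸ ht),
          step_inr, Qzero_mul]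
  | nr1r g hg =>
    rw [act_mul, act_of, act_of]
    rcases step_cases A C g l with ⟨-, -, h0⟩ | h0 | ⟨l', h1, h2⟩
    · rw [h0, step_inr, Qgen_mul_eq (NRel.nr1r g hg)]
    · rw [h0, step_inr, Qzero_mul]
    · rw [h1]
      rcases g with u | u | D | _
      · exact step_stackTop hne _ _ h2.symm
      · exact step_stackTop hne _ _ h2.symm
      · exact step_stackTop hne _ _ h2.symm
      · exact absurd rfl hg
  | nr2 g₁ g₂ h₁ h₂ h =>
    rw [act_mul, act_of, act_of, act_of, step_zero]
    rcases step_cases A C g₁ l with ⟨-, -, h0⟩ | h0 | ⟨l', h1, h2⟩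
    · rw [h0, step_inr, Qgen_mul_eq (NRel.nr2 g₁ g₂ h₁ h₂ h)]; rfl
    · rw [h0, step_inr, Qzero_mul]
    · rw [h1]
      exact step_eq_zero hAC _ _ (h2 ▸ h)
  | nr3 t₁ t₂ h =>
    rw [act_mul, act_of, act_of, act_of, step_zero]
    by_cases hC : l = [] ∧ (Gen.neg t₁ : Gen N).srcSet = C
    · have : step A C (Gen.neg t₁ : Gen N) (.inl l) = .inr (Qgen (.neg t₁)) := by simp [step, hC]
      rw [this, step_inr, Qgen_mul_eq (NRel.nr3 t₁ t₂ h)]; rfl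
    · by_cases ht : N.r t₁ = stackTop (N := N) A l
      · have : step A C (Gen.neg t₁ : Gen N) (.inl l) = .inl (t₁ :: l) := by
          simp only [step, if_neg hC, if_pos ht]
        rw [this]
        simp [step, h.symm]
      · have : step A C (Gen.neg t₁ : Gen N) (.inl l) = .inr (Qzero N) := by
          simp only [step, if_neg hC, if_neg ht]
        rw [this, step_inr, Qzero_mul]
  | nr4 t =>
    rw [act_mul, act_of, act_of, act_of]
    by_cases hC : l = [] ∧ N.r t = C
    · have e1 : step A C (Gen.neg t : Gen N) (.inl l) = .inr (Qgen (.neg t)) := by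
        simp [step, Gen.srcSet, hC]
      rw [e1, step_inr, Qgen_mul_eq (NRel.nr4 t)]
      simp [step, Gen.srcSet, hC]
    · by_cases ht : N.r t = stackTop (N := N) A l
      · have : step A C (Gen.neg t : Gen N) (.inl l) = .inl (t :: l) := by
          simp only [step, Gen.srcSet, if_neg hC, if_pos ht]
        rw [this]
        refine Eq.trans ?_ (step_stackTop hne ⟨N.r t, _⟩ l ht).symm
        simp [step, ht]
      · have : step A C (Gen.neg t : Gen N) (.inl l) = .inr (Qzero N) := by
          simp only [step, Gen.srcSet, if_neg hC, if_neg ht]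
        rw [this, step_inr, Qzero_mul]
        simp only [step, Gen.srcSet, if_neg hC, if_neg ht]
  | nr5 t D h =>
    rw [act_mul, act_of, act_of, act_of, step_zero]
    by_cases hC : l = [] ∧ (Gen.neg t : Gen N).srcSet = C
    · have : step A C (Gen.neg t : Gen N) (.inl l) = .inr (Qgen (.neg t)) := by simp [step, hC]
      rw [this, step_inr, Qgen_mul_eq (NRel.nr5 t D h)]; rfl
    · by_cases ht : N.r t = stackTop (N := N) A l
      · have : step A C (Gen.neg t : Gen N) (.inl l) = .inl (t :: l) := by
          simp only [step, if_neg hC, if_pos ht]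
        rw [this]
        simp [step, h, stackTop]
      · have : step A C (Gen.neg t : Gen N) (.inl l) = .inr (Qzero N) := by
          simp only [step, if_neg hC, if_neg ht]
        rw [this, step_inr, Qzero_mul]
  | nr6l x => rw [act_mul, act_of, act_of, step_zero, step_inr, Qzero_mul]
  | nr6r x =>
    rw [act_mul, act_of, act_of, act_of, step_zero]
    rcases step_cases A C x l with ⟨-, -, h0⟩ | h0 | ⟨l', h1, -⟩
    · rw [h0, step_inr, Qgen_mul_eq (NRel.nr6r x)]; rfl
    · rw [h0, step_inr, Qzero_mul]
    · rw [h1, step_zero]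

theorem act_eq_of_Qofw_eq {A C : Set V} (hne : A ≠ C) (hAC : (A ∩ C).Nonempty)
    {u v : FreeSemigroup (Gen N)} (h : Qofw u = Qofw v) (m : List T ⊕ QGamma N) :
    act A C u m = act A C v m := by
  have h' : QCon N u v := (Con.eq (QCon N)).1 h
  have hle : QCon N ≤ Con.ker (run A C) :=
    Con.conGen_le.2 fun x y hxy => MulOpposite.unop_injective (funext (act_rel hne hAC hxy))
  exact congrArg (fun f => f.unop m) (hle h')

theorem ver_mul_self (A : N.T0) :
    Qgen (.ver A : Gen N) * Qgen (.ver A) = Qgen (.ver A) :=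
  Qgen_mul_eq (NRel.nr1l (.ver A) (by simp))

/-- Two overlapping elements `A, C` of `T⁰` satisfy `A C w = A C w' → C w = C w'`. -/
theorem vertex_cancel (A C : N.T0) (hAC : (A.1 ∩ C.1).Nonempty) (w w' : QGamma N)
    (h : Qgen (.ver A) * (Qgen (.ver C) * w) = Qgen (.ver A) * (Qgen (.ver C) * w')) :
    Qgen (.ver C) * w = Qgen (.ver C) * w' := by
  by_cases hne : A.1 = C.1
  · obtain rfl : A = C := Subtype.ext hne
    simpa only [← mul_assoc, ver_mul_self] using h
  · induction w using Con.induction_on with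
    | H w =>
    induction w' using Con.induction_on with
    | H w' =>
    have key : act A.1 C.1 (FreeSemigroup.of (.ver A) * (FreeSemigroup.of (.ver C) * w)) (.inl []) =
        act A.1 C.1 (FreeSemigroup.of (.ver A) * (FreeSemigroup.of (.ver C) * w')) (.inl []) :=
      act_eq_of_Qofw_eq hne hAC h _
    have hC : step A.1 C.1 (.ver C : Gen N) (.inl []) = .inr (Qgen (.ver C)) := by
      simp [step, Gen.srcSet]
    simp only [act_mul, act_of, step_stackTop hne A [] rfl, hC, act_inr] at key
    exact Sum.inr_injective key

/-! ### Paths -/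

/-- The source of a path symbol as an element of `T⁰`. -/
def srcT0 : PSym N → N.T0
  | Sum.inl t => ⟨N.s t, Or.inl ⟨t, rfl⟩⟩
  | Sum.inr A => A

/-- The range of a path symbol as an element of `T⁰`. -/
def rngT0 : PSym N → N.T0
  | Sum.inl t => ⟨N.r t, Or.inr (Or.inl ⟨t, rfl⟩)⟩
  | Sum.inr A => A

theorem srcT0_val (a : PSym N) : (srcT0 a).1 = a.src := by cases a <;> rfl

theorem rngT0_val (a : PSym N) : (rngT0 a).1 = a.rng := by cases a <;> rfl

theorem src_mul (a : PSym N) : Qgen (.ver (srcT0 a)) * Qgen a.toGen = Qgen a.toGen := by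
  cases a with
  | inl t => exact Qgen_mul_eq (NRel.nr1l (.pos t) (by simp))
  | inr A => exact ver_mul_self A

theorem rng_mul_inv (a : PSym N) :
    Qgen (.ver (rngT0 a)) * Qgen a.toInvGen = Qgen a.toInvGen := by
  cases a with
  | inl t => exact Qgen_mul_eq (NRel.nr1l (.neg t) (by simp))
  | inr A => exact ver_mul_self A

theorem inv_mul (a : PSym N) : Qgen a.toInvGen * Qgen a.toGen = Qgen (.ver (rngT0 a)) := by
  cases a with
  | inl t => exact Qgen_mul_eq (NRel.nr4 t)
  | inr A => exact ver_mul_self A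

theorem word_cons (a b : PSym N) (L : List (PSym N)) :
    Qofw (word (a :: b :: L)) = Qgen a.toGen * Qofw (word (b :: L)) := rfl

theorem genWord_append (L M : List (Gen N)) (hL : L ≠ []) (hM : M ≠ []) :
    genWord (L ++ M) = genWord L * genWord M := by
  obtain ⟨a, L, rfl⟩ := List.exists_cons_of_ne_nil hL
  obtain ⟨b, M, rfl⟩ := List.exists_cons_of_ne_nil hM
  rfl

theorem invWord_cons (a b : PSym N) (L : List (PSym N)) :
    Qofw (invWord (a :: b :: L)) = Qofw (invWord (b :: L)) * Qgen a.toInvGen := by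
  unfold invWord
  rw [List.reverse_cons, List.map_append, genWord_append _ _ (by simp) (by simp)]
  rfl

theorem src_mul_word (a : PSym N) (L : List (PSym N)) :
    Qgen (.ver (srcT0 a)) * Qofw (word (a :: L)) = Qofw (word (a :: L)) := by
  cases L with
  | nil => exact src_mul a
  | cons b L => rw [word_cons, ← mul_assoc, src_mul]

theorem pathRng_cons (a b : PSym N) (L : List (PSym N)) :
    pathRng N (a :: b :: L) = pathRng N (b :: L) := by
  simp [pathRng]

theorem rng_mul_invWord (L : List (PSym N)) (hL : L ≠ []) (B : N.T0) (hB : B.1 = pathRng N L) :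
    Qgen (.ver B) * Qofw (invWord L) = Qofw (invWord L) := by
  induction L with
  | nil => exact absurd rfl hL
  | cons a L ih =>
    cases L with
    | nil =>
      obtain rfl : B = rngT0 a := Subtype.ext (hB.trans (rngT0_val a).symm)
      exact rng_mul_inv a
    | cons b L =>
      rw [invWord_cons, ← mul_assoc, ih (by simp) (by rw [hB, pathRng_cons])]

/-- `β⁻¹β = r(β)` for a linear path `β`. -/
theorem invWord_mul_word (L : List (PSym N)) (hL : L ≠ []) (hlin : IsLinear N L) (B : N.T0)
    (hB : B.1 = pathRng N L) : Qofw (invWord L) * Qofw (word L) = Qgen (.ver B) := by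
  induction L with
  | nil => exact absurd rfl hL
  | cons a L ih =>
    cases L with
    | nil =>
      obtain rfl : B = rngT0 a := Subtype.ext (hB.trans (rngT0_val a).symm)
      exact inv_mul a
    | cons b L =>
      have hab : rngT0 a = srcT0 b :=
        Subtype.ext (by rw [rngT0_val, srcT0_val]; exact hlin 0 a b rfl rfl)
      have hlin' : IsLinear N (b :: L) := fun i c d hc hd =>
        hlin (i + 1) c d (by simpa using hc) (by simpa using hd)
      calc Qofw (invWord (a :: b :: L)) * Qofw (word (a :: b :: L))
          = Qofw (invWord (b :: L)) *
              ((Qgen a.toInvGen * Qgen a.toGen) * Qofw (word (b :: L))) := by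
            rw [invWord_cons, word_cons]; simp only [mul_assoc]
        _ = Qofw (invWord (b :: L)) * Qofw (word (b :: L)) := by
            rw [inv_mul, hab, src_mul_word]
        _ = Qgen (.ver B) := ih (by simp) hlin' (by rw [hB, pathRng_cons])

theorem symbol_cancel (a : PSym N) (z z' : QGamma N)
    (h : Qgen a.toGen * z = Qgen a.toGen * z') :
    Qgen (.ver (rngT0 a)) * z = Qgen (.ver (rngT0 a)) * z' := by
  rw [← inv_mul, mul_assoc, h, mul_assoc]

/-- A path `α`, linear or not, is left cancellable on the elements `z` with `r(α) z = z`. -/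
theorem path_cancel (L : List (PSym N)) (hL : IsPath N L) (B : N.T0) (hB : B.1 = pathRng N L)
    (z z' : QGamma N) (hz : Qgen (.ver B) * z = z) (hz' : Qgen (.ver B) * z' = z')
    (h : Qofw (word L) * z = Qofw (word L) * z') : z = z' := by
  induction L with
  | nil => exact absurd rfl hL.1
  | cons a L ih =>
    cases L with
    | nil =>
      obtain rfl : B = rngT0 a := Subtype.ext (hB.trans (rngT0_val a).symm)
      rw [← hz, ← hz']
      exact symbol_cancel a z z' h
    | cons b L =>
      have hab : ((rngT0 a).1 ∩ (srcT0 b).1).Nonempty := by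
        rw [rngT0_val, srcT0_val]; exact hL.2 0 a b rfl rfl
      have hL' : IsPath N (b :: L) := ⟨by simp, fun i c d hc hd =>
        hL.2 (i + 1) c d (by simpa using hc) (by simpa using hd)⟩
      refine ih hL' (by rw [hB, pathRng_cons]) ?_
      rw [word_cons, mul_assoc, mul_assoc] at h
      have h1 := symbol_cancel a _ _ h
      rw [← src_mul_word b L, mul_assoc, mul_assoc] at h1 ⊢
      exact vertex_cancel _ _ hab _ _ h1

theorem exists_T0_pathRng (L : List (PSym N)) (hL : L ≠ []) : ∃ B : N.T0, B.1 = pathRng N L := by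
  refine ⟨rngT0 (L.getLast hL), ?_⟩
  rw [rngT0_val, pathRng, List.getLast?_eq_some_getLast hL]

/-! ### The relation `L*` -/

/-- A criterion for `a L* b` with `b` idempotent; it only involves multipliers from `S`, not `S¹`. -/
theorem lstar_of_idempotent {S : Type*} [Semigroup S] {a b : S} (hb : b * b = b)
    (hab : a * b = a) (hcancel : ∀ u v : S, a * (b * u) = a * (b * v) → b * u = b * v) :
    LStar a b := by
  intro x y
  have hb1 : ∀ x : WithOne S, ∃ u : S, (b : WithOne S) * x = ((b * u : S) : WithOne S) := by
    intro x
    induction x using WithOne.recOneCoe with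
    | one => exact ⟨b, by rw [mul_one, hb]⟩
    | coe x => exact ⟨x, by rw [WithOne.coe_mul]⟩
  have ha : (a : WithOne S) = (a : WithOne S) * (b : WithOne S) := by
    rw [← WithOne.coe_mul, hab]
  obtain ⟨u, hu⟩ := hb1 x
  obtain ⟨v, hv⟩ := hb1 y
  constructor
  · intro h
    rw [ha, mul_assoc, mul_assoc, hu, hv, ← WithOne.coe_mul, ← WithOne.coe_mul,
      WithOne.coe_inj] at h
    rw [hu, hv, hcancel u v h]
  · intro h
    rw [ha, mul_assoc, mul_assoc, h]

end Aux

/-- for any nonzero `[αβ⁻¹] ∈ Q_Γ` in right normal form, `[αβ⁻¹]` is `L*`-related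
to the idempotent `[ββ⁻¹]`. -/
theorem lstar_right_normal_form (N : Network V T) (α β : List (PSym N))
    (h : IsRNF N α β) (hne : Qrnf N α β ≠ Qzero N) :
    IsIdempotentElem (Qrnf N β β) ∧ LStar (Qrnf N α β) (Qrnf N β β) := by
  obtain ⟨⟨hα, -⟩, ⟨hβ, hlin, -⟩, hrng⟩ := h
  obtain ⟨B, hB⟩ := exists_T0_pathRng β hβ.1
  have hinv := rng_mul_invWord β hβ.1 B hB
  have hββ := invWord_mul_word β hβ.1 hlin B hB
  have hmul : ∀ γ : List (PSym N), Qrnf N γ β * Qrnf N β β = Qrnf N γ β := by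
    intro γ
    simp only [Qrnf, Qofw_mul]
    rw [mul_assoc, ← mul_assoc (Qofw (invWord β)), hββ, hinv]
  refine ⟨hmul β, lstar_of_idempotent (hmul β) (hmul α) ?_⟩
  intro u v huv
  rw [← mul_assoc, ← mul_assoc, hmul α] at huv
  simp only [Qrnf, Qofw_mul, mul_assoc] at huv ⊢
  rw [path_cancel α hα B (hB.trans hrng.symm) (Qofw (invWord β) * u) (Qofw (invWord β) * v)
    (by rw [← mul_assoc, hinv]) (by rw [← mul_assoc, hinv]) huv]

end NetworkSemigroup
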